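/- For every n ≥ 1, the number of trees with n leaves in the class N (the least class with leaf ∈ N, x(u, α) ∈ N for u ∈ N and α a pure-x tree, and y(u, β) ∈ N for u ∈ N and β a pure-y tree) equals the central binomial coefficient binom(2n − 2, n − 1) = (2n − 2)!/((n − 1)!·(n − 1)!). (This number is the dimension of the n-th component of the operad noncom-Bicom.) -/

import Mathlib

/-- Planar binary trees with internal vertices labeled by one of two symbols `x`, `y`. -/
inductive LTree : Type
  | leaf : LTree
  | x : LTree → LTree → LTree
  | y : LTree → LTree → LTree

namespace LTree

/-- Number of leaves. -/
def leaves : LTree → ℕ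
  | leaf => 1
  | x u v => u.leaves + v.leaves
  | y u v => u.leaves + v.leaves

/-- Trees all of whose internal vertices are labeled `x`. -/
inductive PureX : LTree → Prop
  | leaf : PureX leaf
  | node {u v : LTree} : PureX u → PureX v → PureX (x u v)

/-- Trees all of whose internal vertices are labeled `y`. -/
inductive PureY : LTree → Prop
  | leaf : PureY leaf
  | node {u v : LTree} : PureY u → PureY v → PureY (y u v)

/-- The least class `N`: `leaf ∈ N`; `x(u, α) ∈ N` for `u ∈ N`, `α` pure-`x`;
`y(u, β) ∈ N` for `u ∈ N`, `β` pure-`y` (normal monomials of noncom-Bicom). -/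
inductive NormalBicom : LTree → Prop
  | leaf : NormalBicom leaf
  | xn {u α : LTree} : NormalBicom u → PureX α → NormalBicom (x u α)
  | yn {u β : LTree} : NormalBicom u → PureY β → NormalBicom (y u β)

end LTree

namespace LTree

theorem leaves_pos (t : LTree) : 0 < t.leaves := by
  induction t <;> simp only [leaves] <;> omega

theorem finite_leaves_le (n : ℕ) : {t : LTree | t.leaves ≤ n}.Finite := by
  induction n with
  | zero =>
    convert Set.finite_empty
    ext t
    have := leaves_pos t
    simp
    omega
  | succ n ih =>
    refine (((Set.finite_singleton leaf).union (ih.image2 x ih)).union (ih.image2 y ih)).subset ?_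
    intro t ht
    cases t with
    | leaf => simp
    | x u v =>
      have hu := leaves_pos u
      have hv := leaves_pos v
      simp only [Set.mem_ofPred_eq, leaves] at ht
      exact Or.inl (Or.inr ⟨u, by simp only [Set.mem_ofPred_eq]; omega, v,
        by simp only [Set.mem_ofPred_eq]; omega, rfl⟩)
    | y u v =>
      have hu := leaves_pos u
      have hv := leaves_pos v
      simp only [Set.mem_ofPred_eq, leaves] at ht
      exact Or.inr ⟨u, by simp only [Set.mem_ofPred_eq]; omega, v,
        by simp only [Set.mem_ofPred_eq]; omega, rfl⟩

theorem finite_class (p : LTree → Prop) (m : ℕ) :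
    {t : LTree | t.leaves = m + 1 ∧ p t}.Finite :=
  (finite_leaves_le (m + 1)).subset fun _ ht => ht.1.le

/-- The finite set of trees with `m + 1` leaves satisfying `p`. -/
noncomputable def treeClass (p : LTree → Prop) (m : ℕ) : Finset LTree :=
  (finite_class p m).toFinset

theorem mem_treeClass {p : LTree → Prop} {m : ℕ} {t : LTree} :
    t ∈ treeClass p m ↔ t.leaves = m + 1 ∧ p t := by
  simp [treeClass]

open Classical in
/-- Grafts of a tree of class `p` and a tree of class `q`, with `m + 2` leaves in total. -/
noncomputable def grafts (f : LTree → LTree → LTree) (p q : LTree → Prop) (m : ℕ) :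
    Finset LTree :=
  (Finset.HasAntidiagonal.antidiagonal m).biUnion fun ij =>
    Finset.image₂ f (treeClass p ij.1) (treeClass q ij.2)

theorem mem_grafts {f : LTree → LTree → LTree} {p q : LTree → Prop} {m : ℕ} {t : LTree} :
    t ∈ grafts f p q m ↔
      ∃ u v, p u ∧ q v ∧ u.leaves + v.leaves = m + 2 ∧ f u v = t := by
  simp only [grafts, Finset.mem_biUnion, Finset.HasAntidiagonal.mem_antidiagonal, Finset.mem_image₂,
    mem_treeClass]
  constructor
  · rintro ⟨⟨i, j⟩, hij, u, ⟨hu, pu⟩, v, ⟨hv, qv⟩, rfl⟩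
    exact ⟨u, v, pu, qv, by simp only at *; omega, rfl⟩
  · rintro ⟨u, v, pu, qv, h, rfl⟩
    have hu := leaves_pos u
    have hv := leaves_pos v
    exact ⟨(u.leaves - 1, v.leaves - 1), by simp only; omega, u, ⟨by simp only; omega, pu⟩, v,
      ⟨by simp only; omega, qv⟩, rfl⟩

theorem card_grafts {f : LTree → LTree → LTree} (hf : Function.Injective2 f)
    (p q : LTree → Prop) (m : ℕ) :
    (grafts f p q m).card = ∑ ij ∈ Finset.HasAntidiagonal.antidiagonal m,
      (treeClass p ij.1).card * (treeClass q ij.2).card := by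
  classical
  unfold grafts
  rw [Finset.card_biUnion]
  · refine Finset.sum_congr rfl fun ij _ => ?_
    convert Finset.card_image₂ hf _ _
  · rintro ⟨i, j⟩ hij ⟨k, l⟩ hkl hne
    rw [Function.onFun, Finset.disjoint_left]
    intro t h1 h2
    simp only [Finset.mem_image₂, mem_treeClass] at h1 h2
    obtain ⟨u, ⟨hu, -⟩, v, -, rfl⟩ := h1
    obtain ⟨u', ⟨hu', -⟩, v', -, h⟩ := h2
    obtain ⟨rfl, rfl⟩ := hf h
    simp only [Finset.mem_coe, Finset.HasAntidiagonal.mem_antidiagonal] at hij hkl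
    apply hne
    ext <;> simp only <;> omega

theorem x_injective2 : Function.Injective2 x := fun _ _ _ _ h => by simpa using h
theorem y_injective2 : Function.Injective2 y := fun _ _ _ _ h => by simpa using h

theorem leaves_eq_one {t : LTree} : t.leaves = 1 ↔ t = leaf := by
  cases t with
  | leaf => simp [leaves]
  | x u v =>
    have := leaves_pos u; have := leaves_pos v
    simp [leaves]; omega
  | y u v =>
    have := leaves_pos u; have := leaves_pos v
    simp [leaves]; omega

theorem card_treeClass_zero {p : LTree → Prop} (hp : p leaf) : (treeClass p 0).card = 1 := by
  rw [Finset.card_eq_one]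
  refine ⟨leaf, ?_⟩
  ext t
  simp only [mem_treeClass, Finset.mem_singleton, zero_add, leaves_eq_one]
  constructor
  · exact fun h => h.1
  · rintro rfl
    exact ⟨rfl, hp⟩

theorem card_pure {f : LTree → LTree → LTree} (hf : Function.Injective2 f) {p : LTree → Prop}
    (hp : p leaf) (h : ∀ m, treeClass p (m + 1) = grafts f p p m) (m : ℕ) :
    (treeClass p m).card = catalan m := by
  induction m using Nat.strong_induction_on with
  | _ m ih =>
    cases m with
    | zero => rw [card_treeClass_zero hp, catalan_zero]
    | succ m =>
      rw [h, card_grafts hf, catalan_succ']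
      refine Finset.sum_congr rfl fun ij hij => ?_
      rw [Finset.HasAntidiagonal.mem_antidiagonal] at hij
      rw [ih _ (by omega), ih _ (by omega)]

theorem card_pureX (m : ℕ) : (treeClass PureX m).card = catalan m := by
  refine card_pure x_injective2 PureX.leaf (fun m => ?_) m
  ext t
  rw [mem_treeClass, mem_grafts]
  constructor
  · rintro ⟨h, ht⟩
    cases ht with
    | leaf => simp [leaves] at h
    | node hu hv => exact ⟨_, _, hu, hv, h, rfl⟩
  · rintro ⟨u, v, hu, hv, h, rfl⟩
    exact ⟨h, hu.node hv⟩

theorem card_pureY (m : ℕ) : (treeClass PureY m).card = catalan m := by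
  refine card_pure y_injective2 PureY.leaf (fun m => ?_) m
  ext t
  rw [mem_treeClass, mem_grafts]
  constructor
  · rintro ⟨h, ht⟩
    cases ht with
    | leaf => simp [leaves] at h
    | node hu hv => exact ⟨_, _, hu, hv, h, rfl⟩
  · rintro ⟨u, v, hu, hv, h, rfl⟩
    exact ⟨h, hu.node hv⟩

theorem card_normal_succ (m : ℕ) :
    (treeClass NormalBicom (m + 1)).card = 2 * ∑ ij ∈ Finset.HasAntidiagonal.antidiagonal m,
      (treeClass NormalBicom ij.1).card * catalan ij.2 := by
  classical
  have h : treeClass NormalBicom (m + 1) =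
      grafts x NormalBicom PureX m ∪ grafts y NormalBicom PureY m := by
    ext t
    rw [Finset.mem_union, mem_treeClass, mem_grafts, mem_grafts]
    constructor
    · rintro ⟨h, ht⟩
      cases ht with
      | leaf => simp [leaves] at h
      | xn hu hv => exact Or.inl ⟨_, _, hu, hv, h, rfl⟩
      | yn hu hv => exact Or.inr ⟨_, _, hu, hv, h, rfl⟩
    · rintro (⟨u, v, hu, hv, h, rfl⟩ | ⟨u, v, hu, hv, h, rfl⟩)
      · exact ⟨h, hu.xn hv⟩
      · exact ⟨h, hu.yn hv⟩
  rw [h, Finset.card_union_of_disjoint, card_grafts x_injective2, card_grafts y_injective2]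
  · simp only [card_pureX, card_pureY, two_mul]
  · rw [Finset.disjoint_left]
    intro t h1 h2
    rw [mem_grafts] at h1 h2
    obtain ⟨u, v, -, -, -, rfl⟩ := h1
    obtain ⟨u', v', -, -, -, h⟩ := h2
    cases h

theorem centralBinom_succ_eq (m : ℕ) :
    2 * ∑ ij ∈ Finset.HasAntidiagonal.antidiagonal m, Nat.centralBinom ij.1 * catalan ij.2 =
      Nat.centralBinom (m + 1) := by
  have hs : ∑ ij ∈ Finset.HasAntidiagonal.antidiagonal m, Nat.centralBinom ij.1 * catalan ij.2 =
      ∑ ij ∈ Finset.HasAntidiagonal.antidiagonal m, Nat.centralBinom ij.2 * catalan ij.1 :=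
    (Finset.Nat.sum_antidiagonal_swap
      (f := fun ij : ℕ × ℕ => Nat.centralBinom ij.1 * catalan ij.2)).symm
  rw [two_mul]
  nth_rewrite 2 [hs]
  rw [← Finset.sum_add_distrib, ← succ_mul_catalan_eq_centralBinom, catalan_succ',
    Finset.mul_sum]
  refine Finset.sum_congr rfl fun ij hij => ?_
  rw [Finset.HasAntidiagonal.mem_antidiagonal] at hij
  rw [← succ_mul_catalan_eq_centralBinom, ← succ_mul_catalan_eq_centralBinom, ← hij]
  ring

theorem card_normal (m : ℕ) : (treeClass NormalBicom m).card = Nat.centralBinom m := by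
  induction m using Nat.strong_induction_on with
  | _ m ih =>
    cases m with
    | zero => rw [card_treeClass_zero NormalBicom.leaf, Nat.centralBinom_zero]
    | succ m =>
      rw [card_normal_succ, ← centralBinom_succ_eq]
      congr 1
      refine Finset.sum_congr rfl fun ij hij => ?_
      rw [Finset.HasAntidiagonal.mem_antidiagonal] at hij
      rw [ih _ (by omega)]

end LTree

open LTree in
/-- For every `n ≥ 1`, the number of trees with `n` leaves in the class `N` of normal
monomials of noncom-Bicom (i.e. `dim (noncom-Bicom)(n)`) equals the central binomial
coefficient `C(2n - 2, n - 1) = (2n-2)! / ((n-1)! (n-1)!)`. -/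
theorem noncomBicom_dim_eq_centralBinom :
    ∀ n : ℕ, 1 ≤ n →
      Nat.card {t : LTree // t.leaves = n ∧ NormalBicom t} = (2 * n - 2).choose (n - 1) := by
  intro n hn
  obtain ⟨m, rfl⟩ : ∃ m, n = m + 1 := ⟨n - 1, by omega⟩
  have h := card_normal m
  rw [treeClass, ← Set.ncard_eq_toFinset_card _ (finite_class _ m)] at h
  rw [show 2 * (m + 1) - 2 = 2 * m by omega, Nat.add_sub_cancel]
  exact h
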